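/- Let ρ^0 : [0,T] × [-1,1] → [0,1] be continuous, C^1 in t and C^2 in u on (0,T) × (-1,1) with ∂_u ρ^0 continuous on [0,T] × [-1,1], solving the heat equation ∂_t ρ^0 = ∂_u² ρ^0 with boundary values ρ^0(t,-1) = ρ_-, ρ^0(t,1) = ρ_+ for all t ∈ [0,T]. Then for every β ≥ 0, Î^β(ρ^0) ≤ (β²/16) ∫_0^T ∫_{-1}^{1} (∂_u ρ^0)² du dt. -/

import Mathlib

open MeasureTheory Set
open scoped ENNReal

noncomputable section

/-- The Neumann (reflected) Kac kernel. -/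
def Jneum (j : ℝ → ℝ) (u v : ℝ) : ℝ := j (v - u) + j (2 - v - u) + j (-2 - v - u)

/-- Convolution with the Neumann kernel: `(J^neum ⋆ m)(u) = ∫_{-1}^1 J^neum(u,v) m(v) dv`. -/
def convJ (j m : ℝ → ℝ) (u : ℝ) : ℝ := ∫ v in (-1:ℝ)..1, Jneum j u v * m v

/-- Mobility `σ(ρ) = 2ρ(1-ρ)`. -/
def sigmaMob (ρ : ℝ) : ℝ := 2 * ρ * (1 - ρ)

/-- Test functions for the rate functional: `C¹` in time, `C²` in space (with jointly
continuous derivatives), vanishing at the spatial boundary `±1`. -/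
def RateTest (G : ℝ → ℝ → ℝ) : Prop :=
  Continuous (Function.uncurry G) ∧
  (∀ u : ℝ, ContDiff ℝ 1 (fun t => G t u)) ∧
  (∀ t : ℝ, ContDiff ℝ 2 (fun u => G t u)) ∧
  Continuous (Function.uncurry fun t u => deriv (fun s => G s u) t) ∧
  Continuous (Function.uncurry fun t u => deriv (fun w => G t w) u) ∧
  Continuous (Function.uncurry fun t u => deriv (deriv (fun w => G t w)) u) ∧
  (∀ t : ℝ, G t (-1) = 0 ∧ G t 1 = 0)

/-- The linear part `ℓ_G^β(π)` of the rate functional. -/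
def ellG (j : ℝ → ℝ) (β ρm ρp T : ℝ) (π G : ℝ → ℝ → ℝ) : ℝ :=
  (∫ u in (-1:ℝ)..1, π T u * G T u) - (∫ u in (-1:ℝ)..1, π 0 u * G 0 u)
  - (∫ t in (0:ℝ)..T, ∫ u in (-1:ℝ)..1, π t u * deriv (fun s => G s u) t)
  - (∫ t in (0:ℝ)..T, ∫ u in (-1:ℝ)..1, π t u * deriv (deriv (fun w => G t w)) u)
  + ρp * (∫ t in (0:ℝ)..T, deriv (fun w => G t w) 1)
  - ρm * (∫ t in (0:ℝ)..T, deriv (fun w => G t w) (-1))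
  - (β/2) * ∫ t in (0:ℝ)..T, ∫ u in (-1:ℝ)..1,
      sigmaMob (π t u) * (deriv (fun w => G t w) u * deriv (convJ j (fun v => π t v)) u)

/-- The functional `𝒥_G^β(π) = ℓ_G^β(π) - (1/2) ∫∫ σ(π) (∂_u G)²`. -/
def JG (j : ℝ → ℝ) (β ρm ρp T : ℝ) (π G : ℝ → ℝ → ℝ) : ℝ :=
  ellG j β ρm ρp T π G -
    (1/2) * ∫ t in (0:ℝ)..T, ∫ u in (-1:ℝ)..1,
      sigmaMob (π t u) * (deriv (fun w => G t w) u)^2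

/-- The rate functional `Î^β(π) = sup_G 𝒥_G^β(π)`, valued in `[0,+∞]`. -/
def Ihat (j : ℝ → ℝ) (β ρm ρp T : ℝ) (π : ℝ → ℝ → ℝ) : ℝ≥0∞ :=
  ⨆ (G : ℝ → ℝ → ℝ) (_ : RateTest G), ENNReal.ofReal (JG j β ρm ρp T π G)

/-!
A classical solution `ρ` of the heat equation satisfies the weak formulation against every test
function `G`. Only continuity of `ρ` is available up to `t = 0` and `t = T`, so `ρ` minus its affine
boundary profile is compared, through the maximum principle, with finite sine series solving the
heat equation; for these the weak formulation is an integration by parts, and it is stable under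
uniform limits. Hence only the interaction term of `ℓ_G` survives.

Integrating by parts in `v` turns `∂_u (J^neum ⋆ ρ)` into `∫ J^dir(u, v) ∂_v ρ(v) dv`, where `J^dir`
reflects `j` with the opposite sign; it vanishes at `v = ±1`. Since `0 ≤ σ ≤ 1/2`, Young's
inequality removes `G` and leaves `β² / 16` times the integral of the square of this expression.
Schur's test, with all row and column integrals of `|J^dir|` at most `∫ |j|`, concludes.
-/

open Filter Function Topology

section MaximumPrinciple

theorem nonneg_of_hasDerivAt_of_eventually_le_left {f : ℝ → ℝ} {f' x : ℝ} (hf : HasDerivAt f f' x)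
    (hle : ∀ᶠ y in 𝓝[<] x, f y ≤ f x) : 0 ≤ f' := by
  have hslope :=
    (hasDerivWithinAt_iff_tendsto_slope' (by simp)).1 (hf.hasDerivWithinAt (s := Iio x))
  refine ge_of_tendsto hslope ?_
  filter_upwards [hle, self_mem_nhdsWithin] with y hy hyx
  rw [slope_def_field]
  exact div_nonneg_of_nonpos (sub_nonpos.2 hy) (sub_nonpos.2 (le_of_lt hyx))

theorem nonpos_of_isLocalMax_of_hasDerivAt {f f' : ℝ → ℝ} {f'' x : ℝ} (hmax : IsLocalMax f x)
    (hf : ∀ᶠ y in 𝓝 x, HasDerivAt f (f' y) y) (hf' : HasDerivAt f' f'' x) : f'' ≤ 0 := by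
  have hderiv : deriv (deriv f) x = f'' :=
    (EventuallyEq.deriv_eq (hf.mono fun y hy => hy.deriv)).trans hf'.deriv
  by_contra! hpos
  have hmin : IsLocalMin f x := isLocalMin_of_deriv_deriv_pos (hderiv ▸ hpos) hmax.deriv_eq_zero
    hf.self_of_nhds.continuousAt
  have hconst : f =ᶠ[𝓝 x] fun _ => f x := by
    filter_upwards [hmax, hmin] with y hle hge using le_antisymm hle hge
  have hzero : deriv (deriv f) x = 0 := by simpa using hconst.deriv.deriv_eq
  linarith

theorem le_of_time_deriv_lt_space_deriv2 {T a b M : ℝ} {v vt vu vuu : ℝ → ℝ → ℝ}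
    (hv : ContinuousOn (uncurry v) (Icc 0 T ×ˢ Icc a b))
    (hvt : ∀ t ∈ Ioc 0 T, ∀ u ∈ Ioo a b, HasDerivAt (fun s => v s u) (vt t u) t)
    (hvu : ∀ t ∈ Ioc 0 T, ∀ u ∈ Ioo a b, HasDerivAt (v t) (vu t u) u)
    (hvuu : ∀ t ∈ Ioc 0 T, ∀ u ∈ Ioo a b, HasDerivAt (vu t) (vuu t u) u)
    (hlt : ∀ t ∈ Ioc 0 T, ∀ u ∈ Ioo a b, vt t u < vuu t u)
    (hinit : ∀ u ∈ Icc a b, v 0 u ≤ M)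
    (hbdry : ∀ t ∈ Icc 0 T, v t a ≤ M ∧ v t b ≤ M) :
    ∀ t ∈ Icc 0 T, ∀ u ∈ Icc a b, v t u ≤ M := by
  intro t ht u hu
  obtain ⟨⟨t₀, u₀⟩, ⟨ht₀, hu₀⟩, hmax⟩ := (isCompact_Icc.prod isCompact_Icc).exists_isMaxOn
    ⟨(t, u), ht, hu⟩ hv
  replace hmax : ∀ s ∈ Icc 0 T, ∀ w ∈ Icc a b, v s w ≤ v t₀ u₀ :=
    fun s hs w hw => hmax (mk_mem_prod hs hw)
  refine (hmax t ht u hu).trans ?_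
  obtain rfl | ht₀pos := ht₀.1.eq_or_lt
  · exact hinit u₀ hu₀
  obtain rfl | hau := hu₀.1.eq_or_lt
  · exact (hbdry t₀ ht₀).1
  obtain rfl | hub := hu₀.2.eq_or_lt
  · exact (hbdry t₀ ht₀).2
  have htime : 0 ≤ vt t₀ u₀ := by
    refine nonneg_of_hasDerivAt_of_eventually_le_left (hvt t₀ ⟨ht₀pos, ht₀.2⟩ u₀ ⟨hau, hub⟩) ?_
    filter_upwards [Ioo_mem_nhdsLT ht₀pos] with s hs
    exact hmax s ⟨hs.1.le, hs.2.le.trans ht₀.2⟩ u₀ hu₀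
  have hspace : vuu t₀ u₀ ≤ 0 := by
    have hnear : ∀ᶠ w in 𝓝 u₀, w ∈ Ioo a b := Ioo_mem_nhds hau hub
    exact nonpos_of_isLocalMax_of_hasDerivAt
      (hnear.mono fun w hw => hmax t₀ ht₀ w (Ioo_subset_Icc_self hw))
      (hnear.mono fun w hw => hvu t₀ ⟨ht₀pos, ht₀.2⟩ w hw) (hvuu t₀ ⟨ht₀pos, ht₀.2⟩ u₀ ⟨hau, hub⟩)
  exact absurd (hlt t₀ ⟨ht₀pos, ht₀.2⟩ u₀ ⟨hau, hub⟩) (htime.trans' hspace).not_gt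

/-- `w` is a classical solution of the heat equation on `(0, T) × (a, b)`, with time derivative `wt`
and space derivative `wu`. The derivatives are only required pointwise in the open rectangle, and
the second space derivative is `wt` itself. -/
structure IsHeatSolutionOn (T a b : ℝ) (w wt wu : ℝ → ℝ → ℝ) : Prop where
  continuous : Continuous (uncurry w)
  hasDerivAt_time : ∀ t ∈ Ioo 0 T, ∀ u ∈ Ioo a b, HasDerivAt (fun s => w s u) (wt t u) t
  hasDerivAt_space : ∀ t ∈ Ioo 0 T, ∀ u ∈ Ioo a b, HasDerivAt (w t) (wu t u) u
  hasDerivAt_space₂ : ∀ t ∈ Ioo 0 T, ∀ u ∈ Ioo a b, HasDerivAt (wu t) (wt t u) u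

theorem isHeatSolutionOn_of_contDiff {T a b : ℝ} {w : ℝ → ℝ → ℝ} (hw : Continuous (uncurry w))
    (h_time : ∀ u, ContDiff ℝ 1 fun t => w t u) (h_space : ∀ t, ContDiff ℝ 2 (w t))
    (h_heat : ∀ t ∈ Ioo 0 T, ∀ u ∈ Ioo a b,
      deriv (fun s => w s u) t = deriv (deriv (w t)) u) :
    IsHeatSolutionOn T a b w (fun t u => deriv (fun s => w s u) t) (fun t => deriv (w t)) where
  continuous := hw
  hasDerivAt_time t _ u _ := ((h_time u).differentiable one_ne_zero t).hasDerivAt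
  hasDerivAt_space t _ u _ := ((h_space t).differentiable two_ne_zero u).hasDerivAt
  hasDerivAt_space₂ t ht u hu :=
    h_heat t ht u hu ▸ ((h_space t).differentiable_deriv_two u).hasDerivAt

namespace IsHeatSolutionOn

variable {T a b : ℝ} {v vt vu w wt wu : ℝ → ℝ → ℝ}

theorem sub (hv : IsHeatSolutionOn T a b v vt vu) (hw : IsHeatSolutionOn T a b w wt wu) :
    IsHeatSolutionOn T a b (v - w) (vt - wt) (vu - wu) where
  continuous := hv.continuous.sub hw.continuous
  hasDerivAt_time t ht u hu := (hv.hasDerivAt_time t ht u hu).sub (hw.hasDerivAt_time t ht u hu)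
  hasDerivAt_space t ht u hu := (hv.hasDerivAt_space t ht u hu).sub (hw.hasDerivAt_space t ht u hu)
  hasDerivAt_space₂ t ht u hu :=
    (hv.hasDerivAt_space₂ t ht u hu).sub (hw.hasDerivAt_space₂ t ht u hu)

theorem le_add_mul_of_boundary_le {M δ : ℝ} (hw : IsHeatSolutionOn T a b w wt wu)
    (hδ : 0 < δ) (hinit : ∀ u ∈ Icc a b, w 0 u ≤ M)
    (hbdry : ∀ t ∈ Icc 0 T, w t a ≤ M ∧ w t b ≤ M) :
    ∀ t ∈ Ico 0 T, ∀ u ∈ Icc a b, w t u ≤ M + δ * t := by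
  intro t ht u hu
  have hIoo : ∀ s ∈ Ioc 0 t, s ∈ Ioo 0 T := fun s hs => ⟨hs.1, hs.2.trans_lt ht.2⟩
  have hcont : Continuous (uncurry fun s u => w s u - δ * s) :=
    hw.continuous.sub (continuous_const.mul continuous_fst)
  have hle := le_of_time_deriv_lt_space_deriv2 (M := M) (vt := fun s u => wt s u - δ)
    hcont.continuousOn
    (fun s hs u hu => (hw.hasDerivAt_time s (hIoo s hs) u hu).sub
      (by simpa using (hasDerivAt_id s).const_mul δ))
    (fun s hs u hu => (hw.hasDerivAt_space s (hIoo s hs) u hu).sub_const (δ * s))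
    (fun s hs u hu => hw.hasDerivAt_space₂ s (hIoo s hs) u hu)
    (fun s _ u _ => sub_lt_self (wt s u) hδ)
    (fun u hu => by simpa using hinit u hu)
    (fun s hs => by
      have hδs : 0 ≤ δ * s := mul_nonneg hδ.le hs.1
      obtain ⟨ha, hb⟩ := hbdry s ⟨hs.1, hs.2.trans ht.2.le⟩
      constructor <;> linarith)
    t ⟨ht.1, le_rfl⟩ u hu
  linarith

theorem le_of_boundary_le {M : ℝ} (hT : 0 < T) (hw : IsHeatSolutionOn T a b w wt wu)
    (hinit : ∀ u ∈ Icc a b, w 0 u ≤ M) (hbdry : ∀ t ∈ Icc 0 T, w t a ≤ M ∧ w t b ≤ M) :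
    ∀ t ∈ Icc 0 T, ∀ u ∈ Icc a b, w t u ≤ M := by
  intro t ht u hu
  have hIco : Ico 0 T ⊆ {s | w s u ≤ M} := fun s hs => by
    have hlim : Tendsto (fun δ => M + δ * s) (𝓝[>] 0) (𝓝 M) := by
      have hcont : Continuous fun δ : ℝ => M + δ * s := by fun_prop
      simpa using (hcont.tendsto 0).mono_left nhdsWithin_le_nhds
    refine ge_of_tendsto hlim ?_
    filter_upwards [self_mem_nhdsWithin] with δ hδ
    exact hw.le_add_mul_of_boundary_le hδ hinit hbdry s hs u hu
  have hclosed : IsClosed {s | w s u ≤ M} :=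
    isClosed_le (hw.continuous.uncurry_right u) continuous_const
  exact closure_minimal hIco hclosed (closure_Ico hT.ne ▸ ht)

theorem abs_sub_le_of_boundary {ε : ℝ} (hT : 0 < T) (hv : IsHeatSolutionOn T a b v vt vu)
    (hw : IsHeatSolutionOn T a b w wt wu) (hinit : ∀ u ∈ Icc a b, |v 0 u - w 0 u| ≤ ε)
    (hbdry : ∀ t ∈ Icc 0 T, |v t a - w t a| ≤ ε ∧ |v t b - w t b| ≤ ε) :
    ∀ t ∈ Icc 0 T, ∀ u ∈ Icc a b, |v t u - w t u| ≤ ε := by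
  intro t ht u hu
  refine abs_sub_le_iff.2 ⟨(hv.sub hw).le_of_boundary_le hT ?_ ?_ t ht u hu,
    (hw.sub hv).le_of_boundary_le hT ?_ ?_ t ht u hu⟩
  · exact fun u hu => (abs_sub_le_iff.1 (hinit u hu)).1
  · exact fun t ht =>
      ⟨(abs_sub_le_iff.1 (hbdry t ht).1).1, (abs_sub_le_iff.1 (hbdry t ht).2).1⟩
  · exact fun u hu => (abs_sub_le_iff.1 (hinit u hu)).2
  · exact fun t ht =>
      ⟨(abs_sub_le_iff.1 (hbdry t ht).1).2, (abs_sub_le_iff.1 (hbdry t ht).2).2⟩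

end IsHeatSolutionOn

end MaximumPrinciple

section SineApproximation

/-- The Dirichlet sine polynomials on `[0, L]`: real linear combinations of `x ↦ sin (nπx/L)`. -/
def sineSpan (L : ℝ) : Submodule ℝ (ℝ → ℝ) :=
  Submodule.span ℝ (range fun (n : ℤ) (x : ℝ) => Real.sin (n * (Real.pi / L) * x))

theorem sin_mem_sineSpan (L : ℝ) (n : ℤ) :
    (fun x => Real.sin (n * (Real.pi / L) * x)) ∈ sineSpan L :=
  Submodule.subset_span (mem_range_self n)

theorem re_mul_fourier_sub_fourier_neg (L : ℝ) (n : ℤ) (c : ℂ) (x : ℝ) :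
    ((c * (fourier n (x : AddCircle (2 * L)) - fourier n ((-x : ℝ) : AddCircle (2 * L)))).re) / 2 =
      -c.im * Real.sin (n * (Real.pi / L) * x) := by
  have hpos : 2 * (Real.pi : ℂ) * Complex.I * n * x / (2 * L : ℝ) =
      (n * (Real.pi / L) * x : ℝ) * Complex.I := by
    push_cast
    rw [mul_div_mul_comm]
    field
  have hneg : 2 * (Real.pi : ℂ) * Complex.I * n * (-x : ℝ) / (2 * L : ℝ) =
      (-(n * (Real.pi / L) * x) : ℝ) * Complex.I := by
    linear_combination (norm := (push_cast; ring)) -hpos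
  rw [fourier_coe_apply, fourier_coe_apply, hpos, hneg, Complex.mul_re, Complex.sub_re,
    Complex.sub_im, Complex.exp_ofReal_mul_I_re, Complex.exp_ofReal_mul_I_re,
    Complex.exp_ofReal_mul_I_im, Complex.exp_ofReal_mul_I_im, Real.cos_neg, Real.sin_neg]
  ring

theorem re_sub_reflection_mem_sineSpan {L : ℝ} {P : C(AddCircle (2 * L), ℂ)}
    (hP : P ∈ Submodule.span ℂ (range (@fourier (2 * L)))) :
    (fun x : ℝ => (P x - P (-x : ℝ)).re / 2) ∈ sineSpan L := by
  obtain ⟨c, rfl⟩ := Finsupp.mem_span_range_iff_exists_finsupp.1 hP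
  have hsum : (fun x : ℝ => ((c.sum fun n z => z • fourier n) (x : AddCircle (2 * L)) -
      (c.sum fun n z => z • fourier n) ((-x : ℝ) : AddCircle (2 * L))).re / 2) =
      ∑ n ∈ c.support, (-(c n).im) • fun x : ℝ => Real.sin (n * (Real.pi / L) * x) := by
    funext x
    simp only [Finsupp.sum, ContinuousMap.sum_apply, ContinuousMap.smul_apply, smul_eq_mul,
      ← Finset.sum_sub_distrib, ← mul_sub, Complex.re_sum, Finset.sum_div,
      re_mul_fourier_sub_fourier_neg, Finset.sum_apply, Pi.smul_apply]
  rw [hsum]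
  exact Submodule.sum_mem _ fun n _ => Submodule.smul_mem _ _ (sin_mem_sineSpan L n)

theorem exists_odd_circle_extension {L : ℝ} (hL : 0 < L) {θ : ℝ → ℝ}
    (hθ : ContinuousOn θ (Icc 0 L)) (hθ0 : θ 0 = 0) (hθL : θ L = 0) :
    ∃ F : C(AddCircle (2 * L), ℂ), ∀ x ∈ Icc 0 L,
      F x = θ x ∧ F ((-x : ℝ) : AddCircle (2 * L)) = -θ x := by
  have : Fact (0 < 2 * L) := ⟨by positivity⟩
  let θ' : ℝ → ℝ := IccExtend hL.le ((Icc 0 L).domRestrict θ)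
  have hθ' : Continuous θ' := hθ.domRestrict.Icc_extend'
  have hθ'_left : ∀ x ∈ Icc 0 L, θ' x = θ x := fun x hx => IccExtend_of_mem hL.le _ hx
  have hθ'_right : ∀ x, L ≤ x → θ' x = 0 := fun x hx =>
    (IccExtend_of_right_le hL.le _ hx).trans hθL
  -- Odd about `L` by construction; the second summand vanishes on `[0, L]`, the first on `[L, 2L]`.
  let f : ℝ → ℂ := fun x => (θ' x - θ' (2 * L - x) : ℝ)
  have hf : Continuous f := by fun_prop
  have hf_eq : ∀ x ∈ Icc 0 L, f x = θ x := fun x hx => by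
    simp [f, hθ'_left x hx, hθ'_right (2 * L - x) (by linarith [hx.2])]
  have hf_odd : ∀ x, f (2 * L - x) = -f x := fun x => by simp [f]
  have hf0 : f 0 = 0 := by simp [hf_eq 0 ⟨le_rfl, hL.le⟩, hθ0]
  have hf2L : f (2 * L) = 0 := by simpa [hf0] using hf_odd 0
  let F : C(AddCircle (2 * L), ℂ) := ⟨AddCircle.liftIco (2 * L) 0 f,
    AddCircle.liftIco_zero_continuous (hf0.trans hf2L.symm) hf.continuousOn⟩
  have hF : ∀ x ∈ Ico 0 (2 * L), F x = f x := fun x hx =>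
    AddCircle.liftIco_zero_coe_apply (f := f) hx
  refine ⟨F, fun x hx => ⟨?_, ?_⟩⟩
  · rw [hF x ⟨hx.1, by linarith [hx.2]⟩, hf_eq x hx]
  · obtain rfl | hx0 := hx.1.eq_or_lt
    · rw [neg_zero, hF 0 ⟨le_rfl, by positivity⟩, hf0, hθ0]
      simp
    · have hperiod : ((-x : ℝ) : AddCircle (2 * L)) = (2 * L - x : ℝ) := by
        rw [← AddCircle.coe_add_period, neg_add_eq_sub]
      rw [hperiod, hF _ ⟨by linarith [hx.2], by linarith⟩, hf_odd, hf_eq x hx]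

theorem exists_mem_sineSpan_abs_sub_le {L ε : ℝ} (hL : 0 < L) (hε : 0 < ε) {θ : ℝ → ℝ}
    (hθ : ContinuousOn θ (Icc 0 L)) (hθ0 : θ 0 = 0) (hθL : θ L = 0) :
    ∃ p ∈ sineSpan L, ∀ x ∈ Icc 0 L, |θ x - p x| ≤ ε := by
  have : Fact (0 < 2 * L) := ⟨by positivity⟩
  obtain ⟨F, hF⟩ := exists_odd_circle_extension hL hθ hθ0 hθL
  have hdense : F ∈ (Submodule.span ℂ (range (@fourier (2 * L)))).topologicalClosure := by
    rw [span_fourier_closure_eq_top]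
    trivial
  obtain ⟨P, hP, hdist⟩ := Metric.mem_closure_iff.1 hdense ε hε
  have hre : ∀ y, |(F y - P y).re| ≤ ε := fun y => calc
    |(F y - P y).re| ≤ ‖F y - P y‖ := Complex.abs_re_le_norm _
    _ = dist (F y) (P y) := (dist_eq_norm _ _).symm
    _ ≤ ε := (ContinuousMap.dist_apply_le_dist y).trans hdist.le
  refine ⟨_, re_sub_reflection_mem_sineSpan hP, fun x hx => ?_⟩
  obtain ⟨hFx, hFneg⟩ := hF x hx
  have hright := abs_le.1 (hre x)
  have hleft := abs_le.1 (hre ((-x : ℝ) : AddCircle (2 * L)))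
  simp only [hFx, hFneg, Complex.sub_re, Complex.neg_re, Complex.ofReal_re] at hright hleft
  rw [Complex.sub_re, abs_le]
  constructor <;> linarith

end SineApproximation

section Caloric

/-- `V` is of class `C^{1,2}` on the plane (first variable time, second variable space), with time
derivative `Vt` and space derivatives `Vu`, `Vuu`. The heat equation for `V` is the case
`Vuu = Vt`. -/
structure HasParabolicDerivs (V Vt Vu Vuu : ℝ → ℝ → ℝ) : Prop where
  continuous : Continuous (uncurry V)
  continuous_time : Continuous (uncurry Vt)
  continuous_space : Continuous (uncurry Vu)
  continuous_space₂ : Continuous (uncurry Vuu)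
  hasDerivAt_time : ∀ t u, HasDerivAt (fun s => V s u) (Vt t u) t
  hasDerivAt_space : ∀ t u, HasDerivAt (V t) (Vu t u) u
  hasDerivAt_space₂ : ∀ t u, HasDerivAt (Vu t) (Vuu t u) u

namespace HasParabolicDerivs

variable {V Vt Vu Vuu W Wt Wu Wuu : ℝ → ℝ → ℝ}

theorem isHeatSolutionOn (hV : HasParabolicDerivs V Vt Vu Vt) (T a b : ℝ) :
    IsHeatSolutionOn T a b V Vt Vu where
  continuous := hV.continuous
  hasDerivAt_time t _ u _ := hV.hasDerivAt_time t u
  hasDerivAt_space t _ u _ := hV.hasDerivAt_space t u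
  hasDerivAt_space₂ t _ u _ := hV.hasDerivAt_space₂ t u

theorem add (hV : HasParabolicDerivs V Vt Vu Vuu) (hW : HasParabolicDerivs W Wt Wu Wuu) :
    HasParabolicDerivs (V + W) (Vt + Wt) (Vu + Wu) (Vuu + Wuu) where
  continuous := hV.continuous.add hW.continuous
  continuous_time := hV.continuous_time.add hW.continuous_time
  continuous_space := hV.continuous_space.add hW.continuous_space
  continuous_space₂ := hV.continuous_space₂.add hW.continuous_space₂
  hasDerivAt_time t u := (hV.hasDerivAt_time t u).add (hW.hasDerivAt_time t u)
  hasDerivAt_space t u := (hV.hasDerivAt_space t u).add (hW.hasDerivAt_space t u)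
  hasDerivAt_space₂ t u := (hV.hasDerivAt_space₂ t u).add (hW.hasDerivAt_space₂ t u)

theorem const_smul (c : ℝ) (hV : HasParabolicDerivs V Vt Vu Vuu) :
    HasParabolicDerivs (c • V) (c • Vt) (c • Vu) (c • Vuu) where
  continuous := hV.continuous.const_smul c
  continuous_time := hV.continuous_time.const_smul c
  continuous_space := hV.continuous_space.const_smul c
  continuous_space₂ := hV.continuous_space₂.const_smul c
  hasDerivAt_time t u := (hV.hasDerivAt_time t u).const_smul c
  hasDerivAt_space t u := (hV.hasDerivAt_space t u).const_smul c
  hasDerivAt_space₂ t u := (hV.hasDerivAt_space₂ t u).const_smul c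

end HasParabolicDerivs

theorem hasParabolicDerivs_affine (c d : ℝ) :
    HasParabolicDerivs (fun _ u => c + d * u) 0 (fun _ _ => d) 0 where
  continuous := by unfold uncurry; fun_prop
  continuous_time := continuous_const
  continuous_space := continuous_const
  continuous_space₂ := continuous_const
  hasDerivAt_time _ _ := hasDerivAt_const _ _
  hasDerivAt_space _ u := by simpa using ((hasDerivAt_id u).const_mul d).const_add c
  hasDerivAt_space₂ _ _ := hasDerivAt_const _ _

theorem hasParabolicDerivs_sine_mode (a l : ℝ) :
    HasParabolicDerivs (fun t u => Real.exp (-l ^ 2 * t) * Real.sin (l * (u - a)))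
      (fun t u => -l ^ 2 * (Real.exp (-l ^ 2 * t) * Real.sin (l * (u - a))))
      (fun t u => l * (Real.exp (-l ^ 2 * t) * Real.cos (l * (u - a))))
      (fun t u => -l ^ 2 * (Real.exp (-l ^ 2 * t) * Real.sin (l * (u - a)))) := by
  have hphase : ∀ u, HasDerivAt (fun w => l * (w - a)) l u := fun u => by
    simpa using ((hasDerivAt_id u).sub_const a).const_mul l
  have hrate : ∀ t, HasDerivAt (fun s => -l ^ 2 * s) (-l ^ 2) t := fun t => by
    simpa using (hasDerivAt_id t).const_mul (-l ^ 2)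
  exact
    { continuous := by unfold uncurry; fun_prop
      continuous_time := by unfold uncurry; fun_prop
      continuous_space := by unfold uncurry; fun_prop
      continuous_space₂ := by unfold uncurry; fun_prop
      hasDerivAt_time t u := ((hrate t).exp.mul_const _).congr_deriv (by ring)
      hasDerivAt_space t u := ((hphase u).sin.const_mul _).congr_deriv (by ring)
      hasDerivAt_space₂ t u :=
        (((hphase u).cos.const_mul _).const_mul l).congr_deriv (by ring) }

theorem exists_caloric_of_mem_sineSpan {a b : ℝ} (hab : a < b) {p : ℝ → ℝ}
    (hp : p ∈ sineSpan (b - a)) :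
    ∃ V Vt Vu, HasParabolicDerivs V Vt Vu Vt ∧ (∀ t, V t a = 0) ∧ (∀ t, V t b = 0) ∧
      ∀ u, V 0 u = p (u - a) := by
  induction hp using Submodule.span_induction with
  | mem p hp =>
    obtain ⟨n, rfl⟩ := hp
    have hsin : Real.sin (n * (Real.pi / (b - a)) * (b - a)) = 0 := by
      rw [mul_assoc, div_mul_cancel₀ _ (sub_ne_zero.2 hab.ne'), Real.sin_int_mul_pi]
    exact ⟨_, _, _, hasParabolicDerivs_sine_mode a (n * (Real.pi / (b - a))), by simp,
      by simp [hsin], by simp⟩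
  | zero =>
    exact ⟨_, _, _, by simpa using hasParabolicDerivs_affine 0 0, by simp, by simp, by simp⟩
  | add p q _ _ hp hq =>
    obtain ⟨V, Vt, Vu, hV, hVa, hVb, hV0⟩ := hp
    obtain ⟨W, Wt, Wu, hW, hWa, hWb, hW0⟩ := hq
    exact ⟨_, _, _, hV.add hW, by simp [hVa, hWa], by simp [hVb, hWb], by simp [hV0, hW0]⟩
  | smul c p _ hp =>
    obtain ⟨V, Vt, Vu, hV, hVa, hVb, hV0⟩ := hp
    exact ⟨_, _, _, hV.const_smul c, by simp [hVa], by simp [hVb], by simp [hV0]⟩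

theorem exists_caloric_abs_initial_sub_le {a b ra rb ε : ℝ} (hab : a < b) (hε : 0 < ε) {θ : ℝ → ℝ}
    (hθ : ContinuousOn θ (Icc a b)) (hθa : θ a = ra) (hθb : θ b = rb) :
    ∃ V Vt Vu, HasParabolicDerivs V Vt Vu Vt ∧ (∀ t, V t a = ra) ∧ (∀ t, V t b = rb) ∧
      ∀ u ∈ Icc a b, |θ u - V 0 u| ≤ ε := by
  have hne : b - a ≠ 0 := sub_ne_zero.2 hab.ne'
  let d := (rb - ra) / (b - a)
  have hd : d * (b - a) = rb - ra := div_mul_cancel₀ _ hne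
  have hshift : MapsTo (fun x => a + x) (Icc 0 (b - a)) (Icc a b) := fun x hx =>
    ⟨by linarith [hx.1], by linarith [hx.2]⟩
  obtain ⟨p, hp, hpθ⟩ := exists_mem_sineSpan_abs_sub_le (sub_pos.2 hab) hε
    (θ := fun x => θ (a + x) - (ra + d * x))
    ((hθ.comp (by fun_prop) hshift).sub (by fun_prop))
    (by simp [hθa]) (by rw [add_sub_cancel, hθb, hd]; ring)
  obtain ⟨V, Vt, Vu, hV, hVa, hVb, hV0⟩ := exists_caloric_of_mem_sineSpan hab hp
  refine ⟨_, _, _, (hasParabolicDerivs_affine (ra - d * a) d).add hV, fun t => ?_, fun t => ?_,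
    fun u hu => ?_⟩
  · simp [hVa]
  · simp only [Pi.add_apply, hVb]
    linarith
  · convert hpθ (u - a) ⟨by linarith [hu.1], by linarith [hu.2]⟩ using 2
    simp only [Pi.add_apply, hV0, add_sub_cancel]
    ring

theorem exists_caloric_abs_sub_le {T a b ra rb ε : ℝ} (hT : 0 < T) (hab : a < b) (hε : 0 < ε)
    {w wt wu : ℝ → ℝ → ℝ} (hw : IsHeatSolutionOn T a b w wt wu)
    (hbdry : ∀ t ∈ Icc 0 T, w t a = ra ∧ w t b = rb) :
    ∃ V Vt Vu, HasParabolicDerivs V Vt Vu Vt ∧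
      ∀ t ∈ Icc 0 T, ∀ u ∈ Icc a b, |w t u - V t u| ≤ ε := by
  obtain ⟨hw0a, hw0b⟩ := hbdry 0 ⟨le_rfl, hT.le⟩
  obtain ⟨V, Vt, Vu, hV, hVa, hVb, hV0⟩ := exists_caloric_abs_initial_sub_le hab hε
    (hw.continuous.uncurry_left 0).continuousOn hw0a hw0b
  refine ⟨V, Vt, Vu, hV, hw.abs_sub_le_of_boundary hT (hV.isHeatSolutionOn T a b) hV0 ?_⟩
  intro t ht
  simp [hVa, hVb, hbdry t ht, hε.le]

end Caloric

section IteratedIntegrals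

variable {F G : ℝ → ℝ → ℝ}

theorem integral_integral_swap_of_continuous (hF : Continuous (uncurry F)) (a b c d : ℝ) :
    ∫ x in a..b, ∫ y in c..d, F x y = ∫ y in c..d, ∫ x in a..b, F x y := by
  have hint : IntegrableOn (uncurry F) (uIcc a b ×ˢ uIcc c d) :=
    hF.continuousOn.integrableOn_compact (isCompact_uIcc.prod isCompact_uIcc)
  exact intervalIntegral_intervalIntegral_swap
    (hint.mono_set (prod_mono uIoc_subset_uIcc uIoc_subset_uIcc))

theorem intervalIntegrable_integral (hF : Continuous (uncurry F)) (a b c d : ℝ) :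
    IntervalIntegrable (fun x => ∫ y in c..d, F x y) volume a b :=
  (intervalIntegral.continuous_parametric_intervalIntegral_of_continuous' hF c d).intervalIntegrable
    a b

theorem integral_integral_sub_of_continuous (hF : Continuous (uncurry F))
    (hG : Continuous (uncurry G)) (a b c d : ℝ) :
    ∫ x in a..b, ∫ y in c..d, (F x y - G x y) =
      (∫ x in a..b, ∫ y in c..d, F x y) - ∫ x in a..b, ∫ y in c..d, G x y := by
  rw [← intervalIntegral.integral_sub (intervalIntegrable_integral hF a b c d)
    (intervalIntegrable_integral hG a b c d)]
  exact intervalIntegral.integral_congr fun x _ => intervalIntegral.integral_sub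
    ((hF.uncurry_left x).intervalIntegrable c d) ((hG.uncurry_left x).intervalIntegrable c d)

theorem integral_integral_add_of_continuous (hF : Continuous (uncurry F))
    (hG : Continuous (uncurry G)) (a b c d : ℝ) :
    ∫ x in a..b, ∫ y in c..d, (F x y + G x y) =
      (∫ x in a..b, ∫ y in c..d, F x y) + ∫ x in a..b, ∫ y in c..d, G x y := by
  rw [← intervalIntegral.integral_add (intervalIntegrable_integral hF a b c d)
    (intervalIntegrable_integral hG a b c d)]
  exact intervalIntegral.integral_congr fun x _ => intervalIntegral.integral_add
    ((hF.uncurry_left x).intervalIntegrable c d) ((hG.uncurry_left x).intervalIntegrable c d)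

theorem abs_integral_mul_le {a b ε : ℝ} (hab : a ≤ b) {f g : ℝ → ℝ} (hg : Continuous g)
    (hf : ∀ x ∈ Icc a b, |f x| ≤ ε) : |∫ x in a..b, f x * g x| ≤ ε * ∫ x in a..b, |g x| := by
  have hbound : IntervalIntegrable (fun x => ε * |g x|) volume a b :=
    (hg.abs.const_mul ε).intervalIntegrable a b
  rw [← intervalIntegral.integral_const_mul, ← Real.norm_eq_abs]
  refine intervalIntegral.norm_integral_le_of_norm_le hab (Eventually.of_forall fun x hx => ?_)
    hbound
  rw [Real.norm_eq_abs, abs_mul]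
  exact mul_le_mul_of_nonneg_right (hf x (Ioc_subset_Icc_self hx)) (abs_nonneg _)

theorem abs_integral_integral_mul_le {a b c d ε : ℝ} (hab : a ≤ b) (hcd : c ≤ d)
    (hG : Continuous (uncurry G)) (hF : ∀ x ∈ Icc a b, ∀ y ∈ Icc c d, |F x y| ≤ ε) :
    |∫ x in a..b, ∫ y in c..d, F x y * G x y| ≤ ε * ∫ x in a..b, ∫ y in c..d, |G x y| := by
  have hGabs : Continuous (uncurry fun x y => |G x y|) := hG.abs
  rw [← intervalIntegral.integral_const_mul, ← Real.norm_eq_abs]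
  refine intervalIntegral.norm_integral_le_of_norm_le hab (Eventually.of_forall fun x hx => ?_)
    ((intervalIntegrable_integral hGabs a b c d).const_mul ε)
  exact abs_integral_mul_le hcd (hG.uncurry_left x) (hF x (Ioc_subset_Icc_self hx))

end IteratedIntegrals

section WeakForm

/-- The weak formulation of `∂ₜV - ∂ᵤ²V` on `[0, T] × [a, b]` tested against `G`, where `Gt`, `Gu`,
`Guu` are the derivatives of `G`: all derivatives are moved onto `G`, which is meant to vanish at
`a` and `b`, so that only the boundary values of `V` against `Gu` remain. -/
def weakHeatForm (T a b : ℝ) (G Gt Gu Guu V : ℝ → ℝ → ℝ) : ℝ :=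
  (∫ u in a..b, V T u * G T u) - (∫ u in a..b, V 0 u * G 0 u)
    - (∫ t in 0..T, ∫ u in a..b, V t u * Gt t u)
    - (∫ t in 0..T, ∫ u in a..b, V t u * Guu t u)
    + (∫ t in 0..T, V t b * Gu t b) - ∫ t in 0..T, V t a * Gu t a

theorem integral_deriv₂_mul_eq {a b : ℝ} {f f' f'' g g' g'' : ℝ → ℝ}
    (hf : ∀ x, HasDerivAt f (f' x) x) (hf' : ∀ x, HasDerivAt f' (f'' x) x)
    (hf'' : Continuous f'') (hg : ∀ x, HasDerivAt g (g' x) x)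
    (hg' : ∀ x, HasDerivAt g' (g'' x) x) (hg'' : Continuous g'') (hga : g a = 0) (hgb : g b = 0) :
    ∫ x in a..b, f'' x * g x = (∫ x in a..b, f x * g'' x) - f b * g' b + f a * g' a := by
  have hcf : Continuous f := continuous_iff_continuousAt.2 fun x => (hf x).continuousAt
  have hcg : Continuous g := continuous_iff_continuousAt.2 fun x => (hg x).continuousAt
  have hIf : IntervalIntegrable (fun x => f'' x * g x) volume a b :=
    (hf''.mul hcg).intervalIntegrable a b
  have hIg : IntervalIntegrable (fun x => f x * g'' x) volume a b :=
    (hcf.mul hg'').intervalIntegrable a b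
  have hgreen := intervalIntegral.integral_eq_sub_of_hasDerivAt
    (fun x _ => (((hf' x).mul (hg x)).sub ((hf x).mul (hg' x))).congr_deriv
      (by ring : _ = f'' x * g x - f x * g'' x)) (hIf.sub hIg)
  rw [intervalIntegral.integral_sub hIf hIg] at hgreen
  simp only [Pi.sub_apply, Pi.mul_apply, hga, hgb] at hgreen
  linarith

variable {T a b : ℝ} {G Gt Gu Guu V Vt Vu W : ℝ → ℝ → ℝ}

theorem integral_mul_sub_integral_mul_eq {Vuu : ℝ → ℝ → ℝ} (hV : HasParabolicDerivs V Vt Vu Vuu)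
    (hG : HasParabolicDerivs G Gt Gu Guu) (T a b : ℝ) :
    (∫ u in a..b, V T u * G T u) - (∫ u in a..b, V 0 u * G 0 u) =
      (∫ t in 0..T, ∫ u in a..b, Vt t u * G t u) + ∫ t in 0..T, ∫ u in a..b, V t u * Gt t u := by
  have hVG : Continuous (uncurry fun t u => V t u * G t u) := hV.continuous.mul hG.continuous
  have hVtG : Continuous (uncurry fun t u => Vt t u * G t u) :=
    hV.continuous_time.mul hG.continuous
  have hVGt : Continuous (uncurry fun t u => V t u * Gt t u) :=
    hV.continuous.mul hG.continuous_time
  have hderiv : Continuous (uncurry fun t u => Vt t u * G t u + V t u * Gt t u) := hVtG.add hVGt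
  rw [← intervalIntegral.integral_sub ((hVG.uncurry_left T).intervalIntegrable _ _)
    ((hVG.uncurry_left 0).intervalIntegrable _ _), ← integral_integral_add_of_continuous hVtG hVGt,
    integral_integral_swap_of_continuous hderiv]
  refine intervalIntegral.integral_congr fun u _ => ?_
  exact (intervalIntegral.integral_eq_sub_of_hasDerivAt
    (fun t _ => (hV.hasDerivAt_time t u).mul (hG.hasDerivAt_time t u))
    ((hderiv.uncurry_right u).intervalIntegrable 0 T)).symm

theorem HasParabolicDerivs.weakHeatForm_eq_zero (hV : HasParabolicDerivs V Vt Vu Vt)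
    (hG : HasParabolicDerivs G Gt Gu Guu) (hGa : ∀ t, G t a = 0) (hGb : ∀ t, G t b = 0) :
    weakHeatForm T a b G Gt Gu Guu V = 0 := by
  have hVGuu : Continuous (uncurry fun t u => V t u * Guu t u) :=
    hV.continuous.mul hG.continuous_space₂
  have hVGu : ∀ x, IntervalIntegrable (fun t => V t x * Gu t x) volume 0 T := fun x =>
    ((hV.continuous.uncurry_right x).mul (hG.continuous_space.uncurry_right x)).intervalIntegrable
      0 T
  have hgreen : ∀ t, ∫ u in a..b, Vt t u * G t u =
      (∫ u in a..b, V t u * Guu t u) - V t b * Gu t b + V t a * Gu t a := fun t =>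
    integral_deriv₂_mul_eq (hV.hasDerivAt_space t) (hV.hasDerivAt_space₂ t)
      (hV.continuous_time.uncurry_left t) (hG.hasDerivAt_space t) (hG.hasDerivAt_space₂ t)
      (hG.continuous_space₂.uncurry_left t) (hGa t) (hGb t)
  have hIuu := intervalIntegrable_integral hVGuu 0 T a b
  rw [weakHeatForm, integral_mul_sub_integral_mul_eq hV hG]
  simp only [hgreen]
  rw [intervalIntegral.integral_add (hIuu.sub (hVGu b)) (hVGu a),
    intervalIntegral.integral_sub hIuu (hVGu b)]
  ring

theorem weakHeatForm_sub (hV : Continuous (uncurry V)) (hW : Continuous (uncurry W))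
    (hG : HasParabolicDerivs G Gt Gu Guu) :
    weakHeatForm T a b G Gt Gu Guu (V - W) =
      weakHeatForm T a b G Gt Gu Guu V - weakHeatForm T a b G Gt Gu Guu W := by
  have hspace : ∀ {H : ℝ → ℝ → ℝ}, Continuous (uncurry H) → ∀ t,
      ∫ u in a..b, (V t u * H t u - W t u * H t u) =
        (∫ u in a..b, V t u * H t u) - ∫ u in a..b, W t u * H t u := fun hH t =>
    intervalIntegral.integral_sub
      (((hV.uncurry_left t).mul (hH.uncurry_left t)).intervalIntegrable a b)
      (((hW.uncurry_left t).mul (hH.uncurry_left t)).intervalIntegrable a b)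
  have htime : ∀ x, ∫ t in 0..T, (V t x * Gu t x - W t x * Gu t x) =
      (∫ t in 0..T, V t x * Gu t x) - ∫ t in 0..T, W t x * Gu t x := fun x =>
    intervalIntegral.integral_sub
      (((hV.uncurry_right x).mul (hG.continuous_space.uncurry_right x)).intervalIntegrable 0 T)
      (((hW.uncurry_right x).mul (hG.continuous_space.uncurry_right x)).intervalIntegrable 0 T)
  have hdouble : ∀ {H : ℝ → ℝ → ℝ}, Continuous (uncurry H) →
      ∫ t in 0..T, ∫ u in a..b, (V t u * H t u - W t u * H t u) =
        (∫ t in 0..T, ∫ u in a..b, V t u * H t u) - ∫ t in 0..T, ∫ u in a..b, W t u * H t u :=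
    fun {H} hH => integral_integral_sub_of_continuous (F := fun t u => V t u * H t u)
      (G := fun t u => W t u * H t u) (hV.mul hH) (hW.mul hH) 0 T a b
  simp only [weakHeatForm, Pi.sub_apply, sub_mul]
  rw [hspace hG.continuous, hspace hG.continuous, hdouble hG.continuous_time,
    hdouble hG.continuous_space₂, htime, htime]
  ring

theorem abs_weakHeatForm_le {ε : ℝ} (hT : 0 ≤ T) (hab : a ≤ b)
    (hG : HasParabolicDerivs G Gt Gu Guu) (hV : ∀ t ∈ Icc 0 T, ∀ u ∈ Icc a b, |V t u| ≤ ε) :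
    |weakHeatForm T a b G Gt Gu Guu V| ≤ ε * ((∫ u in a..b, |G T u|) + (∫ u in a..b, |G 0 u|)
      + (∫ t in 0..T, ∫ u in a..b, |Gt t u|) + (∫ t in 0..T, ∫ u in a..b, |Guu t u|)
      + (∫ t in 0..T, |Gu t b|) + ∫ t in 0..T, |Gu t a|) := by
  have hspace : ∀ t ∈ Icc 0 T, |∫ u in a..b, V t u * G t u| ≤ ε * ∫ u in a..b, |G t u| :=
    fun t ht => abs_integral_mul_le hab (hG.continuous.uncurry_left t) (hV t ht)
  have htime : ∀ x ∈ Icc a b, |∫ t in 0..T, V t x * Gu t x| ≤ ε * ∫ t in 0..T, |Gu t x| :=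
    fun x hx => abs_integral_mul_le hT (hG.continuous_space.uncurry_right x)
      fun t ht => hV t ht x hx
  have hinit := abs_le.1 (hspace 0 ⟨le_rfl, hT⟩)
  have hfinal := abs_le.1 (hspace T ⟨hT, le_rfl⟩)
  have hleft := abs_le.1 (htime a ⟨le_rfl, hab⟩)
  have hright := abs_le.1 (htime b ⟨hab, le_rfl⟩)
  have hGt := abs_le.1 (abs_integral_integral_mul_le hT hab hG.continuous_time hV)
  have hGuu := abs_le.1 (abs_integral_integral_mul_le hT hab hG.continuous_space₂ hV)
  rw [weakHeatForm, abs_le]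
  constructor <;> linarith

theorem IsHeatSolutionOn.weakHeatForm_eq_zero {ra rb : ℝ} {w wt wu : ℝ → ℝ → ℝ} (hT : 0 < T)
    (hab : a < b) (hw : IsHeatSolutionOn T a b w wt wu)
    (hbdry : ∀ t ∈ Icc 0 T, w t a = ra ∧ w t b = rb)
    (hG : HasParabolicDerivs G Gt Gu Guu) (hGa : ∀ t, G t a = 0) (hGb : ∀ t, G t b = 0) :
    weakHeatForm T a b G Gt Gu Guu w = 0 := by
  set C := (∫ u in a..b, |G T u|) + (∫ u in a..b, |G 0 u|)
    + (∫ t in 0..T, ∫ u in a..b, |Gt t u|) + (∫ t in 0..T, ∫ u in a..b, |Guu t u|)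
    + (∫ t in 0..T, |Gu t b|) + ∫ t in 0..T, |Gu t a|
  have hbound : ∀ ε > 0, |weakHeatForm T a b G Gt Gu Guu w| ≤ ε * C := fun ε hε => by
    obtain ⟨V, Vt, Vu, hV, hwV⟩ := exists_caloric_abs_sub_le hT hab hε hw hbdry
    calc |weakHeatForm T a b G Gt Gu Guu w|
        = |weakHeatForm T a b G Gt Gu Guu (w - V)| := by
          rw [weakHeatForm_sub hw.continuous hV.continuous hG, hV.weakHeatForm_eq_zero hG hGa hGb,
            sub_zero]
      _ ≤ ε * C := abs_weakHeatForm_le hT.le hab.le hG hwV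
  have hlim : Tendsto (fun ε => ε * C) (𝓝[>] 0) (𝓝 0) := by
    simpa using ((continuous_mul_const C).tendsto 0).mono_left nhdsWithin_le_nhds
  refine abs_nonpos_iff.1 (ge_of_tendsto hlim ?_)
  filter_upwards [self_mem_nhdsWithin] with ε hε using hbound ε hε

theorem RateTest.hasParabolicDerivs (hG : RateTest G) :
    HasParabolicDerivs G (fun t u => deriv (fun s => G s u) t) (fun t u => deriv (G t) u)
      (fun t u => deriv (deriv (G t)) u) := by
  obtain ⟨hcont, htime, hspace, hcont_t, hcont_u, hcont_uu, -⟩ := hG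
  exact
    { continuous := hcont
      continuous_time := hcont_t
      continuous_space := hcont_u
      continuous_space₂ := hcont_uu
      hasDerivAt_time t u := ((htime u).differentiable one_ne_zero t).hasDerivAt
      hasDerivAt_space t u := ((hspace t).differentiable two_ne_zero u).hasDerivAt
      hasDerivAt_space₂ t u := ((hspace t).differentiable_deriv_two u).hasDerivAt }

theorem IsHeatSolutionOn.ellG_eq {ρm ρp β : ℝ} {j : ℝ → ℝ} {ρ ρt ρu : ℝ → ℝ → ℝ} (hT : 0 < T)
    (hρ : IsHeatSolutionOn T (-1) 1 ρ ρt ρu)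
    (hbdry : ∀ t ∈ Icc 0 T, ρ t (-1) = ρm ∧ ρ t 1 = ρp) (hG : RateTest G) :
    ellG j β ρm ρp T ρ G = -(β / 2 * ∫ t in 0..T, ∫ u in (-1 : ℝ)..1,
      sigmaMob (ρ t u) * (deriv (G t) u * deriv (convJ j (ρ t)) u)) := by
  have hG0 := hG.2.2.2.2.2.2
  have hweak := hρ.weakHeatForm_eq_zero hT (by norm_num) hbdry hG.hasParabolicDerivs
    (fun t => (hG0 t).1) (fun t => (hG0 t).2)
  have hright : ∫ t in 0..T, ρ t 1 * deriv (G t) 1 = ρp * ∫ t in 0..T, deriv (G t) 1 := by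
    rw [← intervalIntegral.integral_const_mul]
    refine intervalIntegral.integral_congr fun t ht => ?_
    simp only [(hbdry t (uIcc_of_le hT.le ▸ ht)).2]
  have hleft : ∫ t in 0..T, ρ t (-1) * deriv (G t) (-1) = ρm * ∫ t in 0..T, deriv (G t) (-1) := by
    rw [← intervalIntegral.integral_const_mul]
    refine intervalIntegral.integral_congr fun t ht => ?_
    simp only [(hbdry t (uIcc_of_le hT.le ▸ ht)).1]
  rw [weakHeatForm, hright, hleft] at hweak
  rw [ellG, hweak, zero_sub]

end WeakForm

section SchurTest

variable {a b c d : ℝ} {K W : ℝ → ℝ → ℝ}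

theorem sq_integral_mul_le {k w g : ℝ → ℝ} (hab : a ≤ b) (hk : Continuous k) (hw : Continuous w)
    (hg : Continuous g) (hkw : ∀ x, |k x| ≤ w x) :
    (∫ x in a..b, k x * g x) ^ 2 ≤ (∫ x in a..b, w x) * ∫ x in a..b, w x * g x ^ 2 := by
  have hquad : ∀ y : ℝ, 0 ≤ (∫ x in a..b, w x) * (y * y) + (-2 * ∫ x in a..b, k x * g x) * y +
      ∫ x in a..b, w x * g x ^ 2 := fun y => by
    have hpoint : ∀ x, 2 * y * (k x * g x) ≤ y ^ 2 * w x + w x * g x ^ 2 := fun x => by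
      obtain ⟨hlow, hup⟩ := abs_le.1 (hkw x)
      nlinarith [mul_nonneg (neg_le_iff_add_nonneg.1 hlow) (sq_nonneg (y - g x)),
        mul_nonneg (sub_nonneg.2 hup) (sq_nonneg (y + g x))]
    have hle := intervalIntegral.integral_mono_on (μ := volume) hab
      (Continuous.intervalIntegrable (by fun_prop) a b)
      (Continuous.intervalIntegrable (by fun_prop) a b) fun x _ => hpoint x
    rw [intervalIntegral.integral_add (Continuous.intervalIntegrable (by fun_prop) a b)
      (Continuous.intervalIntegrable (by fun_prop) a b), intervalIntegral.integral_const_mul,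
      intervalIntegral.integral_const_mul] at hle
    linarith
  have hdiscrim := discrim_le_zero hquad
  rw [discrim] at hdiscrim
  linarith

theorem integral_sq_integral_mul_le {A B : ℝ} {g : ℝ → ℝ} (hab : a ≤ b) (hcd : c ≤ d)
    (hK : Continuous (uncurry K)) (hW : Continuous (uncurry W)) (hg : Continuous g)
    (hKW : ∀ x y, |K x y| ≤ W x y) (hA : ∀ x ∈ Icc a b, ∫ y in c..d, W x y ≤ A)
    (hB : ∀ y ∈ Icc c d, ∫ x in a..b, W x y ≤ B) :
    ∫ x in a..b, (∫ y in c..d, K x y * g y) ^ 2 ≤ A * B * ∫ y in c..d, g y ^ 2 := by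
  have hW0 : ∀ x y, 0 ≤ W x y := fun x y => (abs_nonneg _).trans (hKW x y)
  have hA0 : 0 ≤ A := (intervalIntegral.integral_nonneg hcd fun y _ => hW0 a y).trans
    (hA a ⟨le_rfl, hab⟩)
  have hKg : Continuous (uncurry fun x y => K x y * g y) := hK.mul (hg.comp continuous_snd)
  have hWg : Continuous (uncurry fun x y => W x y * g y ^ 2) :=
    hW.mul ((hg.comp continuous_snd).pow 2)
  have hWg_swap : Continuous (uncurry fun y x => W x y * g y ^ 2) := hWg.comp continuous_swap
  have hrow : ∀ x ∈ Icc a b, (∫ y in c..d, K x y * g y) ^ 2 ≤ A * ∫ y in c..d, W x y * g y ^ 2 :=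
    fun x hx => (sq_integral_mul_le hcd (hK.uncurry_left x) (hW.uncurry_left x) hg (hKW x)).trans <|
      mul_le_mul_of_nonneg_right (hA x hx) <|
        intervalIntegral.integral_nonneg hcd fun y _ => mul_nonneg (hW0 x y) (sq_nonneg _)
  have hcol : ∀ y ∈ Icc c d, ∫ x in a..b, W x y * g y ^ 2 ≤ B * g y ^ 2 := fun y hy => by
    rw [intervalIntegral.integral_mul_const]
    exact mul_le_mul_of_nonneg_right (hB y hy) (sq_nonneg _)
  calc ∫ x in a..b, (∫ y in c..d, K x y * g y) ^ 2
      ≤ ∫ x in a..b, A * ∫ y in c..d, W x y * g y ^ 2 :=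
        intervalIntegral.integral_mono_on hab
          (((intervalIntegral.continuous_parametric_intervalIntegral_of_continuous' hKg c d).pow
            2).intervalIntegrable a b)
          ((intervalIntegrable_integral hWg a b c d).const_mul A) hrow
    _ = A * ∫ y in c..d, ∫ x in a..b, W x y * g y ^ 2 := by
        rw [intervalIntegral.integral_const_mul, integral_integral_swap_of_continuous hWg]
    _ ≤ A * ∫ y in c..d, B * g y ^ 2 :=
        mul_le_mul_of_nonneg_left (intervalIntegral.integral_mono_on hcd
          (intervalIntegrable_integral hWg_swap c d a b)
          (Continuous.intervalIntegrable (by fun_prop) c d) hcol) hA0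
    _ = A * B * ∫ y in c..d, g y ^ 2 := by rw [intervalIntegral.integral_const_mul, mul_assoc]

end SchurTest

section Kernel

/-- The Dirichlet counterpart of `Jneum`, with the reflections counted negatively. It vanishes at
`v = ±1`, and the space derivative of `J^neum ⋆ m` is this kernel applied to `m'`. -/
def Jdir (j : ℝ → ℝ) (u v : ℝ) : ℝ := j (v - u) - j (2 - v - u) - j (-2 - v - u)

variable {j : ℝ → ℝ}

theorem continuous_Jneum (hj : Continuous j) : Continuous (uncurry (Jneum j)) := by
  unfold Jneum uncurry
  fun_prop

theorem continuous_Jdir (hj : Continuous j) : Continuous (uncurry (Jdir j)) := by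
  unfold Jdir uncurry
  fun_prop

theorem Jneum_comm (hj_even : ∀ u, j (-u) = j u) (u v : ℝ) : Jneum j u v = Jneum j v u := by
  rw [Jneum, Jneum, ← hj_even (v - u), neg_sub, sub_right_comm 2, sub_right_comm (-2)]

theorem abs_Jdir_le (j : ℝ → ℝ) (u v : ℝ) : |Jdir j u v| ≤ Jneum (fun x => |j x|) u v :=
  (abs_sub _ _).trans (add_le_add_left (abs_sub _ _) _)

theorem integral_Jneum_eq (hj : Continuous j) (u : ℝ) :
    ∫ v in (-1 : ℝ)..1, Jneum j u v = ∫ x in (-3 - u)..(3 - u), j x := by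
  have hint : ∀ x y, IntervalIntegrable j volume x y := hj.intervalIntegrable
  have hmiddle : ∫ v in (-1 : ℝ)..1, j (v - u) = ∫ x in (-1 - u)..(1 - u), j x :=
    intervalIntegral.integral_comp_sub_right j u
  have hreflect : ∀ s, ∫ v in (-1 : ℝ)..1, j (s - v - u) = ∫ x in (s - 1 - u)..(s + 1 - u), j x :=
    fun s => by
      simp only [sub_right_comm s _ u]
      rw [intervalIntegral.integral_comp_sub_left]
      congr 1
      ring
  simp only [Jneum]
  rw [intervalIntegral.integral_add (Continuous.intervalIntegrable (by fun_prop) _ _)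
    (Continuous.intervalIntegrable (by fun_prop) _ _),
    intervalIntegral.integral_add (Continuous.intervalIntegrable (by fun_prop) _ _)
    (Continuous.intervalIntegrable (by fun_prop) _ _), hmiddle, hreflect, hreflect,
    ← intervalIntegral.integral_add_adjacent_intervals (hint (-3 - u) (-1 - u)) (hint _ (3 - u)),
    ← intervalIntegral.integral_add_adjacent_intervals (hint (-1 - u) (1 - u)) (hint _ (3 - u))]
  norm_num
  ring

theorem integral_Jneum_le (hj : Continuous j) (hj_int : Integrable j) (hj_nonneg : ∀ u, 0 ≤ j u)
    (u : ℝ) : ∫ v in (-1 : ℝ)..1, Jneum j u v ≤ ∫ x, j x := by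
  rw [integral_Jneum_eq hj, intervalIntegral.integral_of_le (by linarith)]
  exact setIntegral_le_integral hj_int (Eventually.of_forall hj_nonneg)

theorem integral_sq_integral_Jdir_mul_le {g : ℝ → ℝ} (hj : Continuous j) (hj_int : Integrable j)
    (hj_even : ∀ u, j (-u) = j u) (hg : Continuous g) :
    ∫ u in (-1 : ℝ)..1, (∫ v in (-1 : ℝ)..1, Jdir j u v * g v) ^ 2 ≤
      (∫ x, |j x|) ^ 2 * ∫ v in (-1 : ℝ)..1, g v ^ 2 := by
  have hrow : ∀ u, ∫ v in (-1 : ℝ)..1, Jneum (fun x => |j x|) u v ≤ ∫ x, |j x| :=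
    integral_Jneum_le hj.abs hj_int.abs fun x => abs_nonneg (j x)
  have hcol : ∀ v, ∫ u in (-1 : ℝ)..1, Jneum (fun x => |j x|) u v ≤ ∫ x, |j x| := fun v => by
    simpa only [Jneum_comm (j := fun x => |j x|) (fun x => by rw [hj_even]) v] using hrow v
  rw [sq (∫ x, |j x|)]
  exact integral_sq_integral_mul_le (by norm_num) (by norm_num) (continuous_Jdir hj)
    (continuous_Jneum hj.abs) hg (abs_Jdir_le j) (fun u _ => hrow u) fun v _ => hcol v

theorem hasDerivAt_Jneum_left {j' : ℝ → ℝ} (hj : ∀ x, HasDerivAt j (j' x) x) (u v : ℝ) :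
    HasDerivAt (fun u => Jneum j u v) (-Jneum j' u v) u := by
  have hreflect : ∀ s, HasDerivAt (fun u => j (s - u)) (-j' (s - u)) u := fun s =>
    (hj (s - u)).comp_const_sub s u
  exact (((hreflect v).add (hreflect (2 - v))).add (hreflect (-2 - v))).congr_deriv
    (by rw [Jneum]; ring)

theorem hasDerivAt_Jdir_right {j' : ℝ → ℝ} (hj : ∀ x, HasDerivAt j (j' x) x) (u v : ℝ) :
    HasDerivAt (Jdir j u) (Jneum j' u v) v := by
  have hshift : HasDerivAt (fun v => j (v - u)) (j' (v - u)) v := (hj (v - u)).comp_sub_const v u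
  have hreflect : ∀ s, HasDerivAt (fun v => j (s - v - u)) (-j' (s - v - u)) v := fun s =>
    ((hj (s - v - u)).comp_sub_const (s - v) u).comp_const_sub s v
  exact ((hshift.sub (hreflect 2)).sub (hreflect (-2))).congr_deriv (by rw [Jneum]; ring)

theorem Jdir_one_eq_zero (hj_supp : ∀ x, 2 ≤ |x| → j x = 0) {u : ℝ} (hu : -1 ≤ u) :
    Jdir j u 1 = 0 := by
  have hfar : j (-2 - 1 - u) = 0 := hj_supp _ (le_abs.2 (Or.inr (by linarith)))
  rw [Jdir, hfar]
  norm_num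

theorem Jdir_neg_one_eq_zero (hj_supp : ∀ x, 2 ≤ |x| → j x = 0) {u : ℝ} (hu : u ≤ 1) :
    Jdir j u (-1) = 0 := by
  have hfar : j (2 - -1 - u) = 0 := hj_supp _ (le_abs.2 (Or.inl (by linarith)))
  rw [Jdir, hfar]
  norm_num

theorem hasDerivAt_integral_of_continuous_deriv {a b : ℝ} {F F' : ℝ → ℝ → ℝ}
    (hF : ∀ x, Continuous (F x)) (hF' : Continuous (uncurry F'))
    (hderiv : ∀ x y, HasDerivAt (fun x => F x y) (F' x y) x) (x : ℝ) :
    HasDerivAt (fun x => ∫ y in a..b, F x y) (∫ y in a..b, F' x y) x := by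
  obtain ⟨M, hM⟩ := ((isCompact_closedBall x 1).prod
    (isCompact_uIcc (a := a) (b := b))).exists_bound_of_continuousOn hF'.continuousOn
  exact (intervalIntegral.hasDerivAt_integral_of_dominated_loc_of_deriv_le (bound := fun _ => M)
    (Metric.closedBall_mem_nhds x one_pos)
    (Eventually.of_forall fun z => (hF z).aestronglyMeasurable)
    ((hF x).intervalIntegrable a b) (hF'.uncurry_left x).aestronglyMeasurable
    (Eventually.of_forall fun y hy z hz => hM (z, y) ⟨hz, uIoc_subset_uIcc hy⟩)
    intervalIntegrable_const (Eventually.of_forall fun y _ z _ => hderiv z y)).2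

theorem hasDerivAt_convJ (hj : ContDiff ℝ 1 j) (hj_supp : ∀ x, 2 ≤ |x| → j x = 0)
    {m m' : ℝ → ℝ} (hm : Continuous m) (hm' : Continuous m')
    (hderiv : ∀ v ∈ Ioo (-1 : ℝ) 1, HasDerivAt m (m' v) v) {u : ℝ} (hu : u ∈ Icc (-1 : ℝ) 1) :
    HasDerivAt (convJ j m) (∫ v in (-1 : ℝ)..1, Jdir j u v * m' v) u := by
  have hj_deriv : ∀ x, HasDerivAt j (deriv j x) x := fun x =>
    (hj.differentiable (by norm_num) x).hasDerivAt
  have hJ' : Continuous (uncurry (Jneum (deriv j))) := continuous_Jneum (hj.continuous_deriv le_rfl)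
  have hparam : HasDerivAt (convJ j m) (∫ v in (-1 : ℝ)..1, -Jneum (deriv j) u v * m v) u :=
    hasDerivAt_integral_of_continuous_deriv (F' := fun u v => -Jneum (deriv j) u v * m v)
      (fun u => ((continuous_Jneum hj.continuous).uncurry_left u).mul hm)
      (hJ'.neg.mul (hm.comp continuous_snd))
      (fun u v => (hasDerivAt_Jneum_left hj_deriv u v).mul_const (m v)) u
  have hparts := intervalIntegral.integral_mul_deriv_eq_deriv_mul_of_hasDerivAt
    ((continuous_Jdir hj.continuous).uncurry_left u).continuousOn hm.continuousOn
    (fun v _ => hasDerivAt_Jdir_right hj_deriv u v)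
    (fun v hv => hderiv v (by simpa using hv))
    ((hJ'.uncurry_left u).intervalIntegrable (-1) 1) (hm'.intervalIntegrable (-1) 1)
  refine hparam.congr_deriv ?_
  rw [hparts, Jdir_one_eq_zero hj_supp hu.1, Jdir_neg_one_eq_zero hj_supp hu.2]
  simp

end Kernel

section RateFunctional

theorem sigmaMob_mem_Icc {r : ℝ} (hr : r ∈ Icc (0 : ℝ) 1) : sigmaMob r ∈ Icc (0 : ℝ) (1 / 2) := by
  rw [sigmaMob]
  exact ⟨mul_nonneg (mul_nonneg zero_le_two hr.1) (sub_nonneg.2 hr.2),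
    by linarith [sq_nonneg (2 * r - 1)]⟩

theorem neg_mul_sub_half_mul_sq_le {s β γ k : ℝ} (hs : s ∈ Icc (0 : ℝ) (1 / 2)) :
    -(β / 2) * (s * (γ * k)) - 1 / 2 * (s * γ ^ 2) ≤ β ^ 2 / 16 * k ^ 2 := by
  have hsquare : 0 ≤ s * (γ + β / 2 * k) ^ 2 := mul_nonneg hs.1 (sq_nonneg _)
  have hhalf : 0 ≤ (1 / 2 - s) * (β * k) ^ 2 := mul_nonneg (sub_nonneg.2 hs.2) (sq_nonneg _)
  linarith

theorem integral_neg_mul_sub_half_mul_sq_le {T a b β : ℝ} {s γ k : ℝ → ℝ → ℝ} (hT : 0 ≤ T)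
    (hab : a ≤ b) (hs : Continuous (uncurry s)) (hγ : Continuous (uncurry γ))
    (hk : Continuous (uncurry k))
    (hs_mem : ∀ t ∈ Icc 0 T, ∀ u ∈ Icc a b, s t u ∈ Icc (0 : ℝ) (1 / 2)) :
    -(β / 2) * (∫ t in 0..T, ∫ u in a..b, s t u * (γ t u * k t u)) -
        1 / 2 * (∫ t in 0..T, ∫ u in a..b, s t u * γ t u ^ 2) ≤
      β ^ 2 / 16 * ∫ t in 0..T, ∫ u in a..b, k t u ^ 2 := by
  have hlin : Continuous (uncurry fun t u => -(β / 2) * (s t u * (γ t u * k t u))) :=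
    (hs.mul (hγ.mul hk)).const_mul _
  have hquad : Continuous (uncurry fun t u => 1 / 2 * (s t u * γ t u ^ 2)) :=
    (hs.mul (hγ.pow 2)).const_mul _
  have hdiff : Continuous (uncurry fun t u =>
      -(β / 2) * (s t u * (γ t u * k t u)) - 1 / 2 * (s t u * γ t u ^ 2)) := hlin.sub hquad
  have hbound : Continuous (uncurry fun t u => β ^ 2 / 16 * k t u ^ 2) := (hk.pow 2).const_mul _
  simp only [← intervalIntegral.integral_const_mul]
  rw [← integral_integral_sub_of_continuous hlin hquad]
  refine intervalIntegral.integral_mono_on hT (intervalIntegrable_integral hdiff 0 T a b)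
    (intervalIntegrable_integral hbound 0 T a b) fun t ht => ?_
  exact intervalIntegral.integral_mono_on hab ((hdiff.uncurry_left t).intervalIntegrable a b)
    ((hbound.uncurry_left t).intervalIntegrable a b)
    fun u hu => neg_mul_sub_half_mul_sq_le (hs_mem t ht u hu)

variable {j : ℝ → ℝ} {β ρm ρp T : ℝ} {ρ ρt ρu G : ℝ → ℝ → ℝ}

theorem continuous_integral_Jdir_mul (hj : Continuous j) (hρu : Continuous (uncurry ρu)) :
    Continuous (uncurry fun t u => ∫ v in (-1 : ℝ)..1, Jdir j u v * ρu t v) := by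
  have hρu' : Continuous fun q : (ℝ × ℝ) × ℝ => ρu q.1.1 q.2 :=
    hρu.comp ((continuous_fst.comp continuous_fst).prodMk continuous_snd)
  have hJ : Continuous fun q : (ℝ × ℝ) × ℝ => Jdir j q.1.2 q.2 :=
    (continuous_Jdir hj).comp ((continuous_snd.comp continuous_fst).prodMk continuous_snd)
  exact intervalIntegral.continuous_parametric_intervalIntegral_of_continuous' (hJ.mul hρu') (-1) 1

theorem integral_integral_sq_integral_Jdir_mul_le (hj : Continuous j) (hj_int : Integrable j)
    (hj_even : ∀ u, j (-u) = j u) (hT : 0 ≤ T) (hρu : Continuous (uncurry ρu)) :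
    ∫ t in 0..T, ∫ u in (-1 : ℝ)..1, (∫ v in (-1 : ℝ)..1, Jdir j u v * ρu t v) ^ 2 ≤
      (∫ x, |j x|) ^ 2 * ∫ t in 0..T, ∫ u in (-1 : ℝ)..1, ρu t u ^ 2 := by
  have hk : Continuous (uncurry fun t u => (∫ v in (-1 : ℝ)..1, Jdir j u v * ρu t v) ^ 2) :=
    (continuous_integral_Jdir_mul hj hρu).pow 2
  have hρu_sq : Continuous (uncurry fun t u => ρu t u ^ 2) := hρu.pow 2
  rw [← intervalIntegral.integral_const_mul]
  exact intervalIntegral.integral_mono_on hT (intervalIntegrable_integral hk 0 T (-1) 1)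
    ((intervalIntegrable_integral hρu_sq 0 T (-1) 1).const_mul _) fun t _ =>
      integral_sq_integral_Jdir_mul_le hj hj_int hj_even (hρu.uncurry_left t)

theorem IsHeatSolutionOn.JG_eq (hj : ContDiff ℝ 1 j) (hj_supp : ∀ x, 2 ≤ |x| → j x = 0)
    (hT : 0 < T) (hρ : IsHeatSolutionOn T (-1) 1 ρ ρt ρu) (hρu : Continuous (uncurry ρu))
    (hbdry : ∀ t ∈ Icc 0 T, ρ t (-1) = ρm ∧ ρ t 1 = ρp) (hG : RateTest G) :
    JG j β ρm ρp T ρ G =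
      -(β / 2) * (∫ t in 0..T, ∫ u in (-1 : ℝ)..1,
        sigmaMob (ρ t u) * (deriv (G t) u * ∫ v in (-1 : ℝ)..1, Jdir j u v * ρu t v)) -
      1 / 2 * ∫ t in 0..T, ∫ u in (-1 : ℝ)..1, sigmaMob (ρ t u) * deriv (G t) u ^ 2 := by
  have hconv : ∀ t ∈ Ioo 0 T, ∀ u ∈ Icc (-1 : ℝ) 1,
      deriv (convJ j (ρ t)) u = ∫ v in (-1 : ℝ)..1, Jdir j u v * ρu t v := fun t ht u hu =>
    (hasDerivAt_convJ hj hj_supp (hρ.continuous.uncurry_left t) (hρu.uncurry_left t)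
      (hρ.hasDerivAt_space t ht) hu).deriv
  rw [JG, hρ.ellG_eq hT hbdry hG, neg_mul]
  congr 3
  refine intervalIntegral.integral_congr_Ioo_of_le hT.le fun t ht => ?_
  refine intervalIntegral.integral_congr fun u hu => ?_
  rw [uIcc_of_le (by norm_num)] at hu
  simp only [hconv t ht u hu]

theorem rate_functional_heat_solution_general (hj : ContDiff ℝ 1 j)
    (hj_even : ∀ u, j (-u) = j u) (hj_supp : ∀ u, 2 ≤ |u| → j u = 0) (hT : 0 < T)
    (hρ : IsHeatSolutionOn T (-1) 1 ρ ρt ρu) (hρu : Continuous (uncurry ρu))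
    (h_range : ∀ t ∈ Icc 0 T, ∀ u ∈ Icc (-1 : ℝ) 1, ρ t u ∈ Icc (0 : ℝ) 1)
    (h_bdry : ∀ t ∈ Icc 0 T, ρ t (-1) = ρm ∧ ρ t 1 = ρp) :
    Ihat j β ρm ρp T ρ ≤ ENNReal.ofReal
      (β ^ 2 / 16 * ((∫ x, |j x|) ^ 2 * ∫ t in 0..T, ∫ u in (-1 : ℝ)..1, ρu t u ^ 2)) := by
  have hj_int : Integrable j := hj.continuous.integrable_of_hasCompactSupport <|
    HasCompactSupport.intro (isCompact_closedBall 0 2) fun x hx =>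
      hj_supp x (by simpa using (not_le.1 (mt mem_closedBall_zero_iff.2 hx)).le)
  have hσ : Continuous (uncurry fun t u => sigmaMob (ρ t u)) := by
    have hsigmaMob : Continuous sigmaMob := by unfold sigmaMob; fun_prop
    exact hsigmaMob.comp hρ.continuous
  refine iSup₂_le fun G hG => ENNReal.ofReal_le_ofReal ?_
  rw [hρ.JG_eq hj hj_supp hT hρu h_bdry hG]
  have hyoung := integral_neg_mul_sub_half_mul_sq_le (β := β) hT.le (neg_le_self zero_le_one) hσ
    hG.hasParabolicDerivs.continuous_space (continuous_integral_Jdir_mul hj.continuous hρu)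
    fun t ht u hu => sigmaMob_mem_Icc (h_range t ht u hu)
  exact hyoung.trans <| mul_le_mul_of_nonneg_left
    (integral_integral_sq_integral_Jdir_mul_le hj.continuous hj_int hj_even hT.le hρu)
    (by positivity)

end RateFunctional

/-- the rate functional of the solution of the heat equation with the
correct boundary values is bounded by `(β²/16) ∫∫ (∂_u ρ⁰)²`. -/
theorem rate_functional_heat_solution
    (j : ℝ → ℝ)
    (hj_smooth : ContDiff ℝ 1 j)
    (hj_nonneg : ∀ u, 0 ≤ j u)
    (hj_even : ∀ u, j (-u) = j u)
    (hj_supp : ∀ u : ℝ, 1 < |u| → j u = 0)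
    (hj_int : (∫ u : ℝ, j u) = 1)
    (ρm ρp : ℝ) (hρm : ρm ∈ Ioo (0:ℝ) 1) (hρp : ρp ∈ Ioo (0:ℝ) 1)
    (T : ℝ) (hT : 0 < T) (β : ℝ) (hβ : 0 ≤ β)
    (ρ₀ : ℝ → ℝ → ℝ)
    (h_cont : Continuous (Function.uncurry ρ₀))
    (h_t : ∀ u : ℝ, ContDiff ℝ 1 (fun t => ρ₀ t u))
    (h_u : ∀ t : ℝ, ContDiff ℝ 2 (fun u => ρ₀ t u))
    (h_du : Continuous (Function.uncurry fun t u => deriv (fun w => ρ₀ t w) u))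
    (h_range : ∀ t ∈ Icc (0:ℝ) T, ∀ u ∈ Icc (-1:ℝ) 1, ρ₀ t u ∈ Icc (0:ℝ) 1)
    (h_heat : ∀ t ∈ Ioo (0:ℝ) T, ∀ u ∈ Ioo (-1:ℝ) 1,
      deriv (fun s => ρ₀ s u) t = deriv (deriv (fun w => ρ₀ t w)) u)
    (h_bdry : ∀ t ∈ Icc (0:ℝ) T, ρ₀ t (-1) = ρm ∧ ρ₀ t 1 = ρp) :
    Ihat j β ρm ρp T ρ₀ ≤
      ENNReal.ofReal
        (β^2/16 * ∫ t in (0:ℝ)..T, ∫ u in (-1:ℝ)..1, (deriv (fun w => ρ₀ t w) u)^2) := by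
  simpa only [abs_of_nonneg (hj_nonneg _), hj_int, one_pow, one_mul] using
    rate_functional_heat_solution_general hj_smooth hj_even
      (fun u hu => hj_supp u (one_lt_two.trans_le hu)) hT
      (isHeatSolutionOn_of_contDiff h_cont h_t h_u h_heat) h_du h_range h_bdry

end
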